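/- arXiv:2010.04521 — 7 statements merged into one kernel-verified Lean document; each statement's English description precedes it below -/
import Mathlib

section
/- Let n ≥ 2 and let S be a real (n−1)×n matrix of rank n−1 whose columns s_1, …, s_n satisfy S·u = 0 (u the all-ones vector). Let S† be the Moore–Penrose pseudoinverse of S and let s'_i ∈ ℝ^{n−1} denote the i-th row of S† regarded as a vector. Then: (a) S†·S = I − u·uᵀ/n; (b) for each i and all j, k different from i, ⟨s'_i, s_j − s_k⟩ = 0 (so s'_i is normal to the hyperplane spanned by the facet opposite vertex i); (c) ⟨s'_i, s_i⟩ = 1 − 1/n > 0 (so s'_i is the inner normal of that facet); and (d) the Moore–Penrose pseudoinverse of the Gram matrix M = Sᵀ·S satisfies (M†) i j = ⟨s'_i, s'_j⟩ for all i, j. -/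
open Matrix

/-- `B` is the Moore–Penrose pseudoinverse of `A` (the four Penrose conditions;
the pseudoinverse is unique, so this characterizes `A†`). -/
def IsMoorePenrose {k l : Type*} [Fintype k] [Fintype l]
    (A : Matrix k l ℝ) (B : Matrix l k ℝ) : Prop :=
  A * B * A = A ∧ B * A * B = B ∧ (A * B)ᵀ = A * B ∧ (B * A)ᵀ = B * A

/-!
The matrix `1 - S† * S` is the orthogonal projection onto `ker S`. For a centered simplex, `ker S`
is the line spanned by the all-ones vector `u`, so this projection is `u * uᵀ / n`, which is (a);
parts (b) and (c) are read off its entries. Part (d) holds because `S† * (S†)ᵀ` satisfies the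
Penrose conditions for `Sᵀ * S`.
-/

section Projection

variable {κ ι K : Type*} [Fintype ι] [Field K]

theorem ker_mulVecLin_eq_span_singleton {A : Matrix κ ι K} {u : ι → K}
    (hrank : A.rank + 1 = Fintype.card ι) (hu : u ≠ 0) (hAu : A *ᵥ u = 0) :
    LinearMap.ker A.mulVecLin = K ∙ u := by
  have hle : K ∙ u ≤ LinearMap.ker A.mulVecLin := by
    simpa only [Submodule.span_singleton_le_iff_mem, LinearMap.mem_ker, mulVecLin_apply] using hAu
  have hdim : A.rank + Module.finrank K (LinearMap.ker A.mulVecLin) = Fintype.card ι := by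
    rw [Matrix.rank, A.mulVecLin.finrank_range_add_finrank_ker, Module.finrank_fintype_fun_eq_card]
  refine (Submodule.eq_of_le_of_finrank_eq hle ?_).symm
  rw [finrank_span_singleton hu]
  omega

theorem eq_smul_vecMulVec_self_of_isSymm {Q : Matrix ι ι K} {u : ι → K} (hQ : Q.IsSymm)
    (hcol : ∀ j, Q.col j ∈ K ∙ u) (hQu : Q *ᵥ u = u) (hu : u ⬝ᵥ u ≠ 0) :
    Q = (u ⬝ᵥ u)⁻¹ • vecMulVec u u := by
  choose c hc using fun j ↦ Submodule.mem_span_singleton.1 (hcol j)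
  have hQc : Q = vecMulVec c u := by
    ext i j
    rw [← hQ.apply i j]
    exact (congrFun (hc i) j).symm
  have hc_smul : (u ⬝ᵥ u) • c = u := by
    rw [hQc, vecMulVec_mulVec, op_smul_eq_smul] at hQu
    exact hQu
  rw [hQc, ← smul_vecMulVec, (eq_inv_smul_iff₀ hu).2 hc_smul]

end Projection

namespace IsMoorePenrose

variable {κ ι : Type*} [Fintype κ] [Fintype ι] {A : Matrix κ ι ℝ} {B C : Matrix ι κ ℝ}

protected theorem transpose (h : IsMoorePenrose A B) : IsMoorePenrose Aᵀ Bᵀ := by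
  obtain ⟨hABA, hBAB, hAB, hBA⟩ := h
  refine ⟨?_, ?_, ?_, ?_⟩
  · rw [Matrix.mul_assoc, ← transpose_mul, ← transpose_mul, hABA]
  · rw [Matrix.mul_assoc, ← transpose_mul, ← transpose_mul, hBAB]
  · rw [← transpose_mul, hBA, hBA]
  · rw [← transpose_mul, hAB, hAB]

theorem mul_left_unique (hB : IsMoorePenrose A B) (hC : IsMoorePenrose A C) : A * B = A * C := by
  obtain ⟨hABA, -, hAB, -⟩ := hB
  obtain ⟨hACA, -, hAC, -⟩ := hC
  calc A * B = (A * B)ᵀ := hAB.symm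
    _ = (A * C * (A * B))ᵀ := by rw [← Matrix.mul_assoc, hACA]
    _ = A * B * (A * C) := by rw [transpose_mul, hAB, hAC]
    _ = A * C := by rw [← Matrix.mul_assoc, hABA]

theorem mul_right_unique (hB : IsMoorePenrose A B) (hC : IsMoorePenrose A C) : B * A = C * A :=
  transpose_injective <| by
    simpa only [transpose_mul] using hB.transpose.mul_left_unique hC.transpose

protected theorem unique (hB : IsMoorePenrose A B) (hC : IsMoorePenrose A C) : B = C := by
  calc B = B * A * B := hB.2.1.symm
    _ = C * A * C := by
      rw [hB.mul_right_unique hC, Matrix.mul_assoc, hB.mul_left_unique hC, Matrix.mul_assoc]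
    _ = C := hC.2.1

theorem mul_transpose_mul_gram (h : IsMoorePenrose A B) : B * Bᵀ * (Aᵀ * A) = B * A := by
  obtain ⟨-, hBAB, hAB, -⟩ := h
  calc B * Bᵀ * (Aᵀ * A) = B * (A * B)ᵀ * A := by simp only [transpose_mul, Matrix.mul_assoc]
    _ = B * A := by rw [hAB, ← Matrix.mul_assoc, hBAB]

theorem gram_mul_mul_transpose (h : IsMoorePenrose A B) : Aᵀ * A * (B * Bᵀ) = B * A := by
  have hgram := congrArg Matrix.transpose h.mul_transpose_mul_gram
  rw [h.2.2.2] at hgram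
  simpa only [transpose_mul, transpose_transpose] using hgram

protected theorem gram (h : IsMoorePenrose A B) : IsMoorePenrose (Aᵀ * A) (B * Bᵀ) := by
  have hleft := h.mul_transpose_mul_gram
  have hright := h.gram_mul_mul_transpose
  obtain ⟨hABA, hBAB, -, hBA⟩ := h
  refine ⟨?_, ?_, ?_, ?_⟩
  · rw [Matrix.mul_assoc, hleft, Matrix.mul_assoc, ← Matrix.mul_assoc A, hABA]
  · rw [hleft, ← Matrix.mul_assoc, hBAB]
  · rw [hright, hBA]
  · rw [hleft, hBA]

theorem mul_eq_one_sub_smul_vecMulVec [DecidableEq ι] {u : ι → ℝ} (h : IsMoorePenrose A B)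
    (hker : LinearMap.ker A.mulVecLin = ℝ ∙ u) (hu : u ≠ 0) :
    B * A = 1 - (u ⬝ᵥ u)⁻¹ • vecMulVec u u := by
  obtain ⟨hABA, -, -, hBA⟩ := h
  have hAu : A *ᵥ u = 0 := by
    have : u ∈ LinearMap.ker A.mulVecLin := hker ▸ Submodule.mem_span_singleton_self u
    simpa only [LinearMap.mem_ker, mulVecLin_apply] using this
  have hA_mul : A * (1 - B * A) = 0 := by
    rw [Matrix.mul_sub, Matrix.mul_one, ← Matrix.mul_assoc, hABA, sub_self]
  have hsymm : (1 - B * A).IsSymm := isSymm_one.sub hBA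
  have hcol (j : ι) : (1 - B * A).col j ∈ ℝ ∙ u := by
    rw [← hker, LinearMap.mem_ker]
    exact congrArg (fun M : Matrix κ ι ℝ ↦ M.col j) hA_mul
  have hfix : (1 - B * A) *ᵥ u = u := by
    rw [sub_mulVec, one_mulVec, ← mulVec_mulVec, hAu, mulVec_zero, sub_zero]
  rw [← eq_smul_vecMulVec_self_of_isSymm hsymm hcol hfix (dotProduct_self_eq_zero.not.2 hu),
    sub_sub_cancel]

end IsMoorePenrose

theorem stmt_4_general {κ ι : Type*} [Fintype κ] [Fintype ι] [DecidableEq ι] [Nontrivial ι]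
    {S : Matrix κ ι ℝ} (hrank : S.rank + 1 = Fintype.card ι) (hSu : S *ᵥ 1 = 0)
    {Sd : Matrix ι κ ℝ} (hSd : IsMoorePenrose S Sd)
    {Md : Matrix ι ι ℝ} (hMd : IsMoorePenrose (Sᵀ * S) Md) :
    Sd * S = 1 - (Fintype.card ι : ℝ)⁻¹ • Matrix.of (fun _ _ ↦ (1 : ℝ)) ∧
    (∀ i j k : ι, j ≠ i → k ≠ i → ∑ l, Sd i l * (S l j - S l k) = 0) ∧
    (∀ i : ι, ∑ l, Sd i l * S l i = 1 - (Fintype.card ι : ℝ)⁻¹) ∧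
    (0 < 1 - (Fintype.card ι : ℝ)⁻¹) ∧
    (∀ i j : ι, Md i j = ∑ l, Sd i l * Sd j l) := by
  have hker := ker_mulVecLin_eq_span_singleton hrank one_ne_zero hSu
  have hproj : Sd * S = 1 - (Fintype.card ι : ℝ)⁻¹ • Matrix.of (fun _ _ ↦ (1 : ℝ)) := by
    have hones : vecMulVec (1 : ι → ℝ) (1 : ι → ℝ) = Matrix.of (fun _ _ ↦ (1 : ℝ)) :=
      Matrix.ext fun _ _ ↦ mul_one 1
    rw [hSd.mul_eq_one_sub_smul_vecMulVec hker one_ne_zero, hones, one_dotProduct_one]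
  have hentry (i j : ι) :
      ∑ l, Sd i l * S l j = (1 : Matrix ι ι ℝ) i j - (Fintype.card ι : ℝ)⁻¹ := by
    simpa [Matrix.mul_apply] using congrFun₂ hproj i j
  refine ⟨hproj, fun i j k hj hk ↦ ?_, fun i ↦ ?_, ?_, fun i j ↦ ?_⟩
  · simp only [mul_sub, Finset.sum_sub_distrib, hentry, one_apply_ne hj.symm,
      one_apply_ne hk.symm, sub_self]
  · rw [hentry, one_apply_eq]
  · exact sub_pos.2 (inv_lt_one_of_one_lt₀ (Nat.one_lt_cast.2 Fintype.one_lt_card))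
  · rw [hMd.unique hSd.gram, Matrix.mul_apply]
    rfl

theorem stmt_4 {n : ℕ} (hn : 2 ≤ n)
    (S : Matrix (Fin (n - 1)) (Fin n) ℝ)
    (hrank : S.rank = n - 1)
    (hSu : S *ᵥ (fun _ => (1 : ℝ)) = 0)
    (Sd : Matrix (Fin n) (Fin (n - 1)) ℝ) (hSd : IsMoorePenrose S Sd)
    (Md : Matrix (Fin n) (Fin n) ℝ) (hMd : IsMoorePenrose (Sᵀ * S) Md) :
    -- (a) S†·S = I − u·uᵀ/n
    Sd * S = 1 - (n : ℝ)⁻¹ • Matrix.of (fun _ _ => (1 : ℝ)) ∧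
    -- (b) the i-th row of S† is orthogonal to all edge vectors of the facet opposite vertex i
    (∀ i j k : Fin n, j ≠ i → k ≠ i → ∑ l, Sd i l * (S l j - S l k) = 0) ∧
    -- (c) ⟨s'_i, s_i⟩ = 1 − 1/n > 0
    (∀ i : Fin n, ∑ l, Sd i l * S l i = 1 - (n : ℝ)⁻¹) ∧ (0 < 1 - (n : ℝ)⁻¹) ∧
    -- (d) (M†) i j = ⟨s'_i, s'_j⟩ for M = Sᵀ·S
    (∀ i j : Fin n, Md i j = ∑ l, Sd i l * Sd j l) := by
  have : Nontrivial (Fin n) := Fin.nontrivial_iff_two_le.2 hn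
  simpa only [Fintype.card_fin] using
    stmt_4_general (by rw [hrank, Fintype.card_fin]; omega) hSu hSd hMd
end

section
/- Let n ≥ 2, let Q be an n×n Laplacian matrix with pseudoinverse Q†, let ζ ∈ ℝⁿ be the vector of diagonal entries of Q†, let u be the all-ones vector, r = (1/2)·Q·ζ + u/n, R² = (1/2)·ζᵀ·(r + u/n), and let Ω be the n×n matrix with entries Ω i j = ζ_i + ζ_j − 2(Q†) i j (the effective resistance matrix). Then the (n+1)×(n+1) block matrix N with blocks [[4R², −2rᵀ], [−2r, Q]] is invertible and N⁻¹ = −(1/2)·[[0, uᵀ], [u, Ω]] (Fiedler's identity). -/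
open Matrix

/-- A Laplacian matrix: symmetric, nonpositive off-diagonal entries, zero row sums,
and irreducible. -/
def IsLaplacian {m : Type*} [Fintype m] [DecidableEq m] (Q : Matrix m m ℝ) : Prop :=
  Q.IsSymm ∧ (∀ i j, i ≠ j → Q i j ≤ 0) ∧ (Q *ᵥ (fun _ => (1 : ℝ)) = 0) ∧
  ∀ V : Finset m, V.Nonempty → V ≠ Finset.univ → ∃ i ∈ V, ∃ j ∉ V, Q i j ≠ 0

/-! Write `S` for the block matrix `[[1, -ζᵀ], [0, 1]]` and `M` for
`[[0, -(2/n) uᵀ], [-(2/n) u, Q]]`. Expanding the definitions of `r` and `R²` gives `N = S M Sᵀ`.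
Since `Q Q† = 1 - u uᵀ / n`, the inverse of `M` is `[[0, -uᵀ/2], [-u/2, Q†]]`, and multiplying it by
`S⁻ᵀ` on the left and by `S⁻¹ = [[1, ζᵀ], [0, 1]]` on the right adds `-(ζ uᵀ + u ζᵀ) / 2` to its
last block. -/

section BorderedMatrix

variable {m R : Type*}

/-- The symmetric bordering `[[a, vᵀ], [v, A]]` of `A`, in which the matrices of Fiedler's identity
are written. -/
def borderedMatrix (a : R) (v : m → R) (A : Matrix m m R) : Matrix (Unit ⊕ m) (Unit ⊕ m) R :=
  fromBlocks (of fun _ _ => a) (of fun _ j => v j) (of fun i _ => v i) A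

/-- The unipotent matrix `[[1, ζᵀ], [0, 1]]`, which acts by congruence on bordered matrices. -/
def shearMatrix [DecidableEq m] [Zero R] [One R] (ζ : m → R) : Matrix (Unit ⊕ m) (Unit ⊕ m) R :=
  fromBlocks 1 (of fun _ j => ζ j) 0 1

theorem smul_borderedMatrix [Mul R] (c a : R) (v : m → R) (A : Matrix m m R) :
    c • borderedMatrix a v A = borderedMatrix (c * a) (c • v) (c • A) :=
  fromBlocks_smul ..

variable [CommRing R] [Fintype m] [DecidableEq m]

theorem shearMatrix_mul_shearMatrix (ζ η : m → R) :
    shearMatrix ζ * shearMatrix η = shearMatrix (ζ + η) := by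
  rw [shearMatrix, shearMatrix, fromBlocks_multiply, shearMatrix]
  congr 1 <;> ext <;> simp [add_comm]

theorem shearMatrix_neg_mul_shearMatrix (ζ : m → R) :
    shearMatrix (-ζ) * shearMatrix ζ = 1 := by
  rw [shearMatrix_mul_shearMatrix, neg_add_cancel, shearMatrix, ← fromBlocks_one]
  rfl

theorem shearMatrix_mul_borderedMatrix_mul_transpose (ζ v : m → R) (a : R) {A : Matrix m m R}
    (hA : A.IsSymm) :
    shearMatrix ζ * borderedMatrix a v A * (shearMatrix ζ)ᵀ =
      borderedMatrix (a + 2 * (ζ ⬝ᵥ v) + ζ ⬝ᵥ (A *ᵥ ζ)) (v + A *ᵥ ζ) A := by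
  have hζA (j : m) : ∑ k, ζ k * A k j = (A *ᵥ ζ) j := by
    rw [← congrFun (vecMul_transpose A ζ) j, hA.eq]
    rfl
  rw [borderedMatrix, borderedMatrix, shearMatrix, fromBlocks_transpose, fromBlocks_multiply,
    fromBlocks_multiply]
  congr 1 <;> ext i j
  · simp [mul_apply, dotProduct, hζA, mul_add, mul_comm _ (ζ _), Finset.sum_add_distrib]
    ring
  · simp [mul_apply, hζA]
  · simp [mul_apply, mulVec, dotProduct]
  · simp

theorem transpose_shearMatrix_mul_borderedMatrix_zero_mul (ζ w : m → R) (B : Matrix m m R) :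
    (shearMatrix ζ)ᵀ * borderedMatrix 0 w B * shearMatrix ζ =
      borderedMatrix 0 w (B + vecMulVec w ζ + vecMulVec ζ w) := by
  rw [borderedMatrix, borderedMatrix, shearMatrix, fromBlocks_transpose, fromBlocks_multiply,
    fromBlocks_multiply]
  congr 1 <;> ext i j <;> simp [mul_apply, vecMulVec_apply]
  ring

theorem borderedMatrix_zero_mul_borderedMatrix_zero {v w : m → R} {A B : Matrix m m R}
    (hvw : v ⬝ᵥ w = 1) (hAw : A *ᵥ w = 0) (hvB : v ᵥ* B = 0) (hAB : A * B = 1 - vecMulVec v w) :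
    borderedMatrix 0 v A * borderedMatrix 0 w B = 1 := by
  rw [borderedMatrix, borderedMatrix, fromBlocks_multiply, ← fromBlocks_one]
  congr 1
  · ext
    simpa [mul_apply, dotProduct] using hvw
  · ext i j
    simpa [mul_apply, vecMul, dotProduct] using congrFun hvB j
  · ext i j
    simpa [mul_apply, mulVec, dotProduct] using congrFun hAw i
  · ext i j
    simp [mul_apply, hAB, vecMulVec_apply]

theorem borderedMatrix_mul_borderedMatrix_eq_one {v w : m → R} {A B : Matrix m m R}
    (hA : A.IsSymm) (hvw : v ⬝ᵥ w = 1) (hAw : A *ᵥ w = 0) (hvB : v ᵥ* B = 0)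
    (hAB : A * B = 1 - vecMulVec v w) (ζ : m → R) :
    borderedMatrix (ζ ⬝ᵥ (A *ᵥ ζ) - 2 * (ζ ⬝ᵥ v)) (v - A *ᵥ ζ) A *
      borderedMatrix 0 w (B + vecMulVec w ζ + vecMulVec ζ w) = 1 := by
  have hN : borderedMatrix (ζ ⬝ᵥ (A *ᵥ ζ) - 2 * (ζ ⬝ᵥ v)) (v - A *ᵥ ζ) A =
      shearMatrix (-ζ) * borderedMatrix 0 v A * (shearMatrix (-ζ))ᵀ := by
    rw [shearMatrix_mul_borderedMatrix_mul_transpose _ _ _ hA]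
    congr 1
    · simp only [neg_dotProduct, mulVec_neg, dotProduct_neg]
      ring
    · rw [mulVec_neg, sub_eq_add_neg]
  have hS := shearMatrix_neg_mul_shearMatrix ζ
  have hST : (shearMatrix (-ζ))ᵀ * (shearMatrix ζ)ᵀ = 1 := by
    rw [← transpose_mul, mul_eq_one_comm.mp hS, transpose_one]
  rw [hN, ← transpose_shearMatrix_mul_borderedMatrix_zero_mul]
  calc
    _ = shearMatrix (-ζ) * (borderedMatrix 0 v A *
        ((shearMatrix (-ζ))ᵀ * (shearMatrix ζ)ᵀ) * borderedMatrix 0 w B) * shearMatrix ζ := by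
      simp only [Matrix.mul_assoc]
    _ = 1 := by
      rw [hST, Matrix.mul_one, borderedMatrix_zero_mul_borderedMatrix_zero hvw hAw hvB hAB,
        Matrix.mul_one, hS]

end BorderedMatrix

namespace IsLaplacian

variable {m : Type*} [Fintype m] [DecidableEq m] {Q : Matrix m m ℝ}

/- Maximum principle: an entry maximizing `x` forces its neighbours to maximize `x`, so by
irreducibility the maximizers are all of `m`. -/
theorem eq_of_mulVec_eq_zero_of_le (hQ : IsLaplacian Q) {x : m → ℝ} (hx : Q *ᵥ x = 0) {p : m}
    (hp : ∀ i, x i ≤ x p) (i : m) : x i = x p := by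
  obtain ⟨-, hoff, hrow, hirr⟩ := hQ
  suffices hV : Finset.univ.filter (fun i => x i = x p) = Finset.univ by
    simpa using hV.ge (Finset.mem_univ i)
  by_contra hV
  obtain ⟨i, hi, j, hj, hij⟩ := hirr _ ⟨p, by simp⟩ hV
  rw [Finset.mem_filter_univ] at hi hj
  have hsum : ∑ k, Q i k * (x k - x p) = 0 := by
    have hdiff : Q *ᵥ (x - x p • fun _ => 1) = 0 := by
      rw [mulVec_sub, mulVec_smul, hx, hrow, smul_zero, sub_zero]
    simpa [mulVec, dotProduct] using congrFun hdiff i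
  have hnonneg (k : m) : 0 ≤ Q i k * (x k - x p) := by
    obtain rfl | hik := eq_or_ne i k
    · rw [hi, sub_self, mul_zero]
    · exact mul_nonneg_of_nonpos_of_nonpos (hoff i k hik) (sub_nonpos.mpr (hp k))
  have hterm : Q i j * (x j - x p) = 0 :=
    (Finset.sum_eq_zero_iff_of_nonneg fun k _ => hnonneg k).mp hsum j (Finset.mem_univ j)
  exact mul_ne_zero hij (sub_ne_zero.mpr hj) hterm

theorem ker_mulVecLin (hQ : IsLaplacian Q) :
    LinearMap.ker Q.mulVecLin = Submodule.span ℝ {1} := by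
  refine le_antisymm (fun x hx => Submodule.mem_span_singleton.mpr ?_) ?_
  · cases isEmpty_or_nonempty m
    · exact ⟨0, Subsingleton.elim _ _⟩
    · obtain ⟨p, hp⟩ := Finite.exists_max x
      refine ⟨x p, funext fun i => ?_⟩
      simp [hQ.eq_of_mulVec_eq_zero_of_le hx hp i]
  · rw [Submodule.span_singleton_le_iff_mem]
    exact hQ.2.2.1

end IsLaplacian

theorem mulVec_one_of_ker_eq_span {m R : Type*} [Fintype m] [CommSemiring R] {Q : Matrix m m R}
    (hker : LinearMap.ker Q.mulVecLin = Submodule.span R {1}) : Q *ᵥ 1 = 0 :=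
  LinearMap.mem_ker.mp (hker ▸ Submodule.mem_span_singleton_self 1)

theorem eq_inv_card_smul_vecMulVec_one {m K : Type*} [Fintype m] [Field K] {Q E : Matrix m m K}
    (hker : LinearMap.ker Q.mulVecLin = Submodule.span K {1}) (hQE : Q * E = 0)
    (hE : 1 ᵥ* E = 1) : E = (Fintype.card m : K)⁻¹ • vecMulVec 1 1 := by
  ext i j
  obtain ⟨c, hc⟩ : ∃ c : K, c • 1 = E.col j := by
    rw [← Submodule.mem_span_singleton, ← hker, LinearMap.mem_ker, mulVecLin_apply]
    exact congrArg (fun M => M.col j) hQE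
  have hcol (k : m) : E k j = c := by simpa using (congrFun hc k).symm
  have hsum : Fintype.card m * c = 1 := by
    simpa [vecMul, dotProduct, hcol] using congrFun hE j
  simp [hcol, eq_inv_of_mul_eq_one_right hsum]

namespace IsMoorePenrose

theorem vecMul_eq_zero {k l : Type*} [Fintype k] [Fintype l] {A : Matrix k l ℝ} {B : Matrix l k ℝ}
    (h : IsMoorePenrose A B) {v : l → ℝ} (hv : A *ᵥ v = 0) : v ᵥ* B = 0 := by
  obtain ⟨-, hBAB, -, hBA⟩ := h
  rw [← hBAB, ← vecMul_vecMul, ← hBA, vecMul_transpose, ← mulVec_mulVec, hv, mulVec_zero,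
    zero_vecMul]

variable {m : Type*} [Fintype m] {Q Qd : Matrix m m ℝ}

theorem mul_mul_eq_self_of_isSymm (h : IsMoorePenrose Q Qd) (hQ : Q.IsSymm) :
    Q * (Q * Qd) = Q := by
  obtain ⟨hQQdQ, -, hQQd, -⟩ := h
  simpa only [transpose_mul, hQQd, hQ.eq] using congrArg transpose hQQdQ

theorem mul_eq_one_sub [DecidableEq m] (h : IsMoorePenrose Q Qd) (hQ : Q.IsSymm)
    (hker : LinearMap.ker Q.mulVecLin = Submodule.span ℝ {1}) :
    Q * Qd = 1 - (Fintype.card m : ℝ)⁻¹ • vecMulVec 1 1 := by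
  have hQ1 : 1 ᵥ* Q = 0 := by
    rw [← mulVec_transpose, hQ.eq, mulVec_one_of_ker_eq_span hker]
  have hE : 1 - Q * Qd = (Fintype.card m : ℝ)⁻¹ • vecMulVec 1 1 := by
    apply eq_inv_card_smul_vecMulVec_one hker
    · rw [Matrix.mul_sub, Matrix.mul_one, h.mul_mul_eq_self_of_isSymm hQ, sub_self]
    · rw [vecMul_sub, vecMul_one, ← vecMul_vecMul, hQ1, zero_vecMul, sub_zero]
  rw [← hE, sub_sub_cancel]

theorem borderedMatrix_mul_borderedMatrix [DecidableEq m] [Nonempty m] (h : IsMoorePenrose Q Qd)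
    (hQ : Q.IsSymm) (hker : LinearMap.ker Q.mulVecLin = Submodule.span ℝ {1}) {α β : ℝ}
    (hαβ : α * β = (Fintype.card m : ℝ)⁻¹) (ζ : m → ℝ) :
    borderedMatrix (ζ ⬝ᵥ (Q *ᵥ ζ) - 2 * (ζ ⬝ᵥ (α • 1))) (α • 1 - Q *ᵥ ζ) Q *
      borderedMatrix 0 (β • 1) (Qd + vecMulVec (β • 1) ζ + vecMulVec ζ (β • 1)) = 1 := by
  have hQ1 : Q *ᵥ 1 = 0 := mulVec_one_of_ker_eq_span hker
  apply borderedMatrix_mul_borderedMatrix_eq_one hQ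
  · rw [smul_dotProduct, dotProduct_smul, smul_smul, hαβ]
    simp
  · rw [mulVec_smul, hQ1, smul_zero]
  · rw [smul_vecMul, h.vecMul_eq_zero hQ1, smul_zero]
  · rw [h.mul_eq_one_sub hQ hker, smul_vecMulVec, vecMulVec_smul, smul_smul, hαβ]

end IsMoorePenrose

theorem stmt_7_general {m : Type*} [Fintype m] [DecidableEq m] [Nonempty m] {Q Qd : Matrix m m ℝ}
    (hQ : Q.IsSymm) (hker : LinearMap.ker Q.mulVecLin = Submodule.span ℝ {1})
    (hQd : IsMoorePenrose Q Qd) (ζ r : m → ℝ)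
    (hr : r = (1 / 2 : ℝ) • (Q *ᵥ ζ) + (Fintype.card m : ℝ)⁻¹ • 1)
    (R2 : ℝ) (hR2 : R2 = (1 / 2 : ℝ) * (ζ ⬝ᵥ (r + (Fintype.card m : ℝ)⁻¹ • 1)))
    (Ω : Matrix m m ℝ) (hΩ : ∀ i j, Ω i j = ζ i + ζ j - 2 * Qd i j) :
    IsUnit (borderedMatrix (4 * R2) ((-2 : ℝ) • r) Q) ∧
      (borderedMatrix (4 * R2) ((-2 : ℝ) • r) Q)⁻¹ = (-(1 / 2) : ℝ) • borderedMatrix 0 1 Ω := by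
  have hcorner : 4 * R2 =
      ζ ⬝ᵥ (Q *ᵥ ζ) - 2 * (ζ ⬝ᵥ ((-2 * (Fintype.card m : ℝ)⁻¹) • 1)) := by
    simp only [hR2, hr, dotProduct_add, dotProduct_smul, smul_eq_mul]
    ring
  have hborder : (-2 : ℝ) • r = (-2 * (Fintype.card m : ℝ)⁻¹) • 1 - Q *ᵥ ζ := by
    rw [hr]
    module
  have hresistance : (-(1 / 2) : ℝ) • Ω =
      Qd + vecMulVec ((-(1 / 2) : ℝ) • 1) ζ + vecMulVec ζ ((-(1 / 2) : ℝ) • 1) := by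
    ext i j
    simp only [Matrix.smul_apply, hΩ, Matrix.add_apply, vecMulVec_apply, Pi.smul_apply,
      Pi.one_apply, smul_eq_mul]
    ring
  have hmul : borderedMatrix (4 * R2) ((-2 : ℝ) • r) Q *
      ((-(1 / 2) : ℝ) • borderedMatrix 0 1 Ω) = 1 := by
    rw [smul_borderedMatrix, mul_zero, hcorner, hborder, hresistance]
    exact hQd.borderedMatrix_mul_borderedMatrix hQ hker (by ring) ζ
  exact ⟨.of_mul_eq_one _ hmul, inv_eq_right_inv hmul⟩

/-- Fiedler's identity. -/
theorem stmt_7 {n : ℕ} (hn : 2 ≤ n) (Q : Matrix (Fin n) (Fin n) ℝ)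
    (hQ : IsLaplacian Q)
    (Qd : Matrix (Fin n) (Fin n) ℝ) (hQd : IsMoorePenrose Q Qd)
    (ζ : Fin n → ℝ) (hζ : ∀ i, ζ i = Qd i i)
    (r : Fin n → ℝ)
    (hr : r = (1 / 2 : ℝ) • (Q *ᵥ ζ) + (n : ℝ)⁻¹ • (fun _ => (1 : ℝ)))
    (R2 : ℝ)
    (hR2 : R2 = (1 / 2 : ℝ) * (ζ ⬝ᵥ (r + (n : ℝ)⁻¹ • (fun _ => (1 : ℝ)))))
    (Ω : Matrix (Fin n) (Fin n) ℝ)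
    (hΩ : ∀ i j, Ω i j = ζ i + ζ j - 2 * Qd i j)
    (N : Matrix (Unit ⊕ Fin n) (Unit ⊕ Fin n) ℝ)
    (hN : N = Matrix.fromBlocks (Matrix.of fun _ _ => 4 * R2)
      (Matrix.of fun _ j => -2 * r j) (Matrix.of fun i _ => -2 * r i) Q) :
    IsUnit N ∧
    N⁻¹ = (-(1 / 2) : ℝ) • Matrix.fromBlocks 0
      (Matrix.of fun _ _ => (1 : ℝ)) (Matrix.of fun _ _ => (1 : ℝ)) Ω := by
  have : NeZero n := ⟨by omega⟩
  exact hN ▸ stmt_7_general hQ.1 hQ.ker_mulVecLin hQd ζ r (by rwa [Fintype.card_fin])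
    R2 (by rwa [Fintype.card_fin]) Ω hΩ
end

section
/- Let n ≥ 2, let Q be an n×n Laplacian matrix, and let W be a nonempty proper subset of the index set. Then the principal submatrix Q_{WW} (rows and columns restricted to W) is positive definite; in particular it is invertible. -/
open Matrix

/-!
Symmetry and zero row sums give `2 xᵀQx = ∑ i, ∑ j, -Q i j * (x i - x j) ^ 2`, a sum of nonnegative
terms. If it vanishes, then `x` agrees at any two indices joined by a nonzero entry, so
irreducibility makes `x` constant. A vector on a proper subset of the indices, extended by zero,
vanishes somewhere, hence can only be constant by being zero.
-/

theorem neg_mul_sq_sub_nonneg {m R : Type*} [CommRing R] [LinearOrder R] [IsOrderedRing R]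
    {Q : Matrix m m R} (hoff : ∀ i j, i ≠ j → Q i j ≤ 0) (x : m → R) (i j : m) :
    0 ≤ -Q i j * (x i - x j) ^ 2 := by
  obtain rfl | hij := eq_or_ne i j
  · simp
  · exact mul_nonneg (neg_nonneg.2 (hoff i j hij)) (sq_nonneg _)

section QuadraticForm

variable {m R : Type*} [Fintype m] [CommRing R] {Q : Matrix m m R}

theorem two_mul_dotProduct_mulVec_eq_sum_sq_sub (hsymm : Q.IsSymm) (hrow : Q *ᵥ 1 = 0)
    (x : m → R) : 2 * (x ⬝ᵥ Q *ᵥ x) = ∑ i, ∑ j, -Q i j * (x i - x j) ^ 2 := by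
  have hcol : 1 ᵥ* Q = 0 := by rw [← mulVec_transpose, hsymm.eq, hrow]
  have hsq_left : ∑ i, ∑ j, x i ^ 2 * Q i j = 0 :=
    calc ∑ i, ∑ j, x i ^ 2 * Q i j = (x ^ 2) ⬝ᵥ Q *ᵥ 1 := by
          simp [dotProduct, mulVec, Finset.mul_sum]
      _ = 0 := by rw [hrow, dotProduct_zero]
  have hsq_right : ∑ i, ∑ j, Q i j * x j ^ 2 = 0 :=
    calc ∑ i, ∑ j, Q i j * x j ^ 2 = 1 ⬝ᵥ Q *ᵥ (x ^ 2) := by simp [dotProduct, mulVec]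
      _ = 0 := by rw [dotProduct_mulVec, hcol, zero_dotProduct]
  have hexpand (i j : m) : -Q i j * (x i - x j) ^ 2 =
      2 * (x i * (Q i j * x j)) - x i ^ 2 * Q i j - Q i j * x j ^ 2 := by ring
  simp only [hexpand, Finset.sum_sub_distrib, hsq_left, hsq_right, sub_zero, dotProduct, mulVec,
    Finset.mul_sum]

variable [LinearOrder R] [IsStrictOrderedRing R]

theorem dotProduct_mulVec_nonneg_of_offDiag_nonpos (hsymm : Q.IsSymm)
    (hoff : ∀ i j, i ≠ j → Q i j ≤ 0) (hrow : Q *ᵥ 1 = 0) (x : m → R) : 0 ≤ x ⬝ᵥ Q *ᵥ x := by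
  refine nonneg_of_mul_nonneg_right (a := 2) ?_ two_pos
  rw [two_mul_dotProduct_mulVec_eq_sum_sq_sub hsymm hrow]
  exact Finset.sum_nonneg fun i _ ↦ Finset.sum_nonneg fun j _ ↦ neg_mul_sq_sub_nonneg hoff x i j

theorem eq_of_dotProduct_mulVec_eq_zero (hsymm : Q.IsSymm) (hoff : ∀ i j, i ≠ j → Q i j ≤ 0)
    (hrow : Q *ᵥ 1 = 0) {x : m → R} (hx : x ⬝ᵥ Q *ᵥ x = 0) {i j : m} (hij : Q i j ≠ 0) :
    x i = x j := by
  have hsum : ∑ i, ∑ j, -Q i j * (x i - x j) ^ 2 = 0 := by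
    rw [← two_mul_dotProduct_mulVec_eq_sum_sq_sub hsymm hrow, hx, mul_zero]
  have hnonneg := neg_mul_sq_sub_nonneg hoff x
  have hrow_sum : ∑ j, -Q i j * (x i - x j) ^ 2 = 0 :=
    congrFun ((Fintype.sum_eq_zero_iff_of_nonneg
      fun i ↦ Finset.sum_nonneg fun j _ ↦ hnonneg i j).1 hsum) i
  have hterm : -Q i j * (x i - x j) ^ 2 = 0 :=
    congrFun ((Fintype.sum_eq_zero_iff_of_nonneg (hnonneg i)).1 hrow_sum) j
  simpa [hij, sub_eq_zero] using hterm

end QuadraticForm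

theorem eq_of_forall_exists_cut {m α : Type*} [Fintype m] {r : m → m → Prop}
    (hcut : ∀ V : Finset m, V.Nonempty → V ≠ Finset.univ → ∃ i ∈ V, ∃ j ∉ V, r i j)
    {x : m → α} (hx : ∀ i j, r i j → x i = x j) (i j : m) : x i = x j := by
  classical
  by_contra hne
  obtain ⟨k, hk, l, hl, hkl⟩ := hcut {k | x k = x j} ⟨j, by simp⟩
    fun huniv ↦ hne (by simpa using huniv.ge (Finset.mem_univ i))
  simp only [Finset.mem_filter_univ] at hk hl
  exact hl (hx k l hkl ▸ hk)

section Extend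

variable {m ι R : Type*} [Fintype m] [Fintype ι] [NonUnitalNonAssocSemiring R] {f : ι → m}

theorem dotProduct_extend_zero (hf : f.Injective) (v : m → R) (x : ι → R) :
    v ⬝ᵥ Function.extend f x 0 = (v ∘ f) ⬝ᵥ x := by
  refine (Fintype.sum_of_injective f hf _ _ (fun j hj ↦ ?_) fun i ↦ ?_).symm
  · rw [Function.extend_apply' _ _ _ (by simpa using hj), Pi.zero_apply, mul_zero]
  · rw [hf.extend_apply, Function.comp_apply]

theorem extend_zero_dotProduct (hf : f.Injective) (x : ι → R) (v : m → R) :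
    Function.extend f x 0 ⬝ᵥ v = x ⬝ᵥ (v ∘ f) := by
  refine (Fintype.sum_of_injective f hf _ _ (fun j hj ↦ ?_) fun i ↦ ?_).symm
  · rw [Function.extend_apply' _ _ _ (by simpa using hj), Pi.zero_apply, zero_mul]
  · rw [hf.extend_apply, Function.comp_apply]

theorem dotProduct_submatrix_mulVec (hf : f.Injective) (Q : Matrix m m R) (x : ι → R) :
    x ⬝ᵥ Q.submatrix f f *ᵥ x =
      Function.extend f x 0 ⬝ᵥ Q *ᵥ Function.extend f x 0 := by
  rw [extend_zero_dotProduct hf]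
  congr 1
  ext i
  exact (dotProduct_extend_zero hf (Q (f i)) x).symm

end Extend

namespace IsLaplacian

variable {m : Type*} [Fintype m] [DecidableEq m] {Q : Matrix m m ℝ}

theorem dotProduct_mulVec_nonneg (hQ : IsLaplacian Q) (x : m → ℝ) : 0 ≤ x ⬝ᵥ Q *ᵥ x :=
  dotProduct_mulVec_nonneg_of_offDiag_nonpos hQ.1 hQ.2.1 hQ.2.2.1 x

theorem eq_of_dotProduct_mulVec_eq_zero (hQ : IsLaplacian Q) {x : m → ℝ}
    (hx : x ⬝ᵥ Q *ᵥ x = 0) (i j : m) : x i = x j :=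
  eq_of_forall_exists_cut hQ.2.2.2
    (fun _ _ ↦ _root_.eq_of_dotProduct_mulVec_eq_zero hQ.1 hQ.2.1 hQ.2.2.1 hx) i j

end IsLaplacian

theorem stmt_11_general {m ι : Type*} [Fintype m] [DecidableEq m] {Q : Matrix m m ℝ}
    (hQ : IsLaplacian Q) {f : ι → m} (hf : f.Injective) (hf' : ¬ f.Surjective) :
    (Q.submatrix f f).PosDef := by
  have := Fintype.ofInjective f hf
  have hherm : Q.IsHermitian := by
    rw [IsHermitian, conjTranspose_eq_transpose_of_trivial, hQ.1.eq]
  refine .of_dotProduct_mulVec_pos (hherm.submatrix f) fun x hx ↦ ?_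
  rw [star_trivial, dotProduct_submatrix_mulVec hf]
  refine (hQ.dotProduct_mulVec_nonneg _).lt_of_ne' fun hzero ↦ hx (funext fun i ↦ ?_)
  obtain ⟨j, hj⟩ := not_forall.1 hf'
  calc x i = Function.extend f x 0 (f i) := (hf.extend_apply x 0 i).symm
    _ = Function.extend f x 0 j := hQ.eq_of_dotProduct_mulVec_eq_zero hzero _ _
    _ = 0 := Function.extend_apply' _ _ _ hj

theorem stmt_11 {n : ℕ} (hn : 2 ≤ n) (Q : Matrix (Fin n) (Fin n) ℝ)
    (hQ : IsLaplacian Q)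
    (W : Finset (Fin n)) (hW : W.Nonempty) (hWu : W ≠ Finset.univ) :
    (Q.submatrix (Subtype.val : ↥W → Fin n) (Subtype.val : ↥W → Fin n)).PosDef ∧
    IsUnit (Q.submatrix (Subtype.val : ↥W → Fin n) (Subtype.val : ↥W → Fin n)).det := by
  have hval : ¬ (Subtype.val : ↥W → Fin n).Surjective := by
    simpa [Function.Surjective, Finset.eq_univ_iff_forall] using hWu
  have hpos := stmt_11_general hQ Subtype.val_injective hval
  exact ⟨hpos, hpos.det_pos.ne'.isUnit⟩
end

section
/- Let n ≥ 2, let Q be an n×n Laplacian matrix with index set N, and let W ⊆ V ⊆ N with W nonempty and V ≠ N. Then the quotient (composition) property of the Schur complement holds: Q/(N∖W) = [Q/(N∖V)]/(V∖W), where Q/X denotes the Schur complement of Q with respect to the subset X of indices (all the required principal submatrices being invertible). -/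
open Matrix

/-- The Schur complement `Q/Vᶜ` of `Q` with respect to the removed index set `Vᶜ`
(keeping the indices in `V`): `Q_{VV} − Q_{VVᶜ}·(Q_{VᶜVᶜ})⁻¹·Q_{VᶜV}`. -/
noncomputable def schurKeep {m : Type*} [Fintype m] [DecidableEq m]
    (Q : Matrix m m ℝ) (V : Finset m) : Matrix ↥V ↥V ℝ :=
  Q.submatrix (Subtype.val : ↥V → m) (Subtype.val : ↥V → m) -
    Q.submatrix (Subtype.val : ↥V → m) (Subtype.val : ↥(Vᶜ) → m) *
      (Q.submatrix (Subtype.val : ↥(Vᶜ) → m) (Subtype.val : ↥(Vᶜ) → m))⁻¹ *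
      Q.submatrix (Subtype.val : ↥(Vᶜ) → m) (Subtype.val : ↥V → m)

/-! Call `f` harmonic off `V` when `Q *ᵥ f` vanishes outside `V`. If `Q` is invertible on the
complement of `V`, every vector on `V` has a harmonic extension, and `Q/Vᶜ` sends the values of `f`
on `V` to the values of `Q *ᵥ f` on `V`. Let `f` be harmonic off `W`. As `W ⊆ V`, it is also
harmonic off `V`, and its restriction to `V` is harmonic off `W` for `Q/Vᶜ`. Hence both sides of the
quotient formula send the values of `f` on `W` to those of `Q *ᵥ f`. The same correspondence between
harmonic vectors of `Q` and of `Q/Vᶜ` makes `Q/Vᶜ` invertible on `V ∖ W`.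

For a Laplacian, `f ⬝ᵥ Q *ᵥ f` is the Dirichlet energy `-½ ∑ᵢⱼ Qᵢⱼ (fᵢ - fⱼ)²`. It is zero when
`f = 0` on `V` and `f` is harmonic off `V`; by irreducibility such an `f` is then
constant, hence zero when `V` is nonempty, so `Q` is invertible on `Vᶜ`. -/

section HarmonicOff

variable {m R : Type*} [Fintype m]

/-- `f` is harmonic off `V` for the matrix `Q`: it solves the homogeneous equation `Q *ᵥ f = 0` at
every index outside the boundary `V`. -/
def IsHarmonicOff [NonUnitalNonAssocSemiring R] (Q : Matrix m m R) (V : Finset m) (f : m → R) :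
    Prop :=
  ∀ i ∉ V, (Q *ᵥ f) i = 0

theorem IsHarmonicOff.mono [NonUnitalNonAssocSemiring R] {Q : Matrix m m R} {V W : Finset m}
    {f : m → R} (hf : IsHarmonicOff Q W f) (hWV : W ⊆ V) : IsHarmonicOff Q V f :=
  fun i hi => hf i fun hiW => hi (hWV hiW)

variable [DecidableEq m]

/-- The principal submatrix `Q_{VᶜVᶜ}`, which the Schur complement `schurKeep Q V` inverts. -/
abbrev complBlock (Q : Matrix m m R) (V : Finset m) : Matrix ↥Vᶜ ↥Vᶜ R :=
  Q.submatrix Subtype.val Subtype.val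

theorem submatrix_mulVec_restrict_add_compl [NonUnitalNonAssocSemiring R] {l n : Type*}
    (A : Matrix n m R) (r : l → n) (V : Finset m) (f : m → R) :
    A.submatrix r (Subtype.val : ↥V → m) *ᵥ V.restrict f +
      A.submatrix r (Subtype.val : ↥Vᶜ → m) *ᵥ Vᶜ.restrict f = (A *ᵥ f) ∘ r := by
  funext i
  change ∑ j : ↥V, A (r i) j * f j + ∑ j : ↥Vᶜ, A (r i) j * f j = ∑ j, A (r i) j * f j
  rw [Finset.sum_coe_sort V fun j => A (r i) j * f j,
    Finset.sum_coe_sort Vᶜ fun j => A (r i) j * f j, Finset.sum_add_sum_compl]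

theorem isHarmonicOff_iff_submatrix_mulVec [NonUnitalNonAssocSemiring R] {Q : Matrix m m R}
    {V : Finset m} {f : m → R} :
    IsHarmonicOff Q V f ↔
      Q.submatrix (Subtype.val : ↥Vᶜ → m) (Subtype.val : ↥V → m) *ᵥ V.restrict f +
        complBlock Q V *ᵥ Vᶜ.restrict f = 0 := by
  rw [submatrix_mulVec_restrict_add_compl]
  simp only [IsHarmonicOff, funext_iff, Subtype.forall, Finset.mem_compl, Function.comp_apply,
    Pi.zero_apply]

theorem exists_restrict_eq_and_restrict_compl_eq (V : Finset m) (x : ↥V → R) (z : ↥Vᶜ → R) :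
    ∃ f : m → R, V.restrict f = x ∧ Vᶜ.restrict f = z := by
  refine ⟨fun i => if hi : i ∈ V then x ⟨i, hi⟩ else z ⟨i, Finset.mem_compl.mpr hi⟩, ?_, ?_⟩
  · funext i
    exact dif_pos i.2
  · funext i
    exact dif_neg (Finset.mem_compl.mp i.2)

theorem exists_restrict_eq_isHarmonicOff [CommRing R] {Q : Matrix m m R} {V : Finset m}
    (hQV : IsUnit (complBlock Q V)) (x : ↥V → R) :
    ∃ f : m → R, V.restrict f = x ∧ IsHarmonicOff Q V f := by
  obtain ⟨z, hz⟩ := mulVec_surjective_iff_isUnit.mpr hQV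
    (-(Q.submatrix (Subtype.val : ↥Vᶜ → m) (Subtype.val : ↥V → m) *ᵥ x))
  obtain ⟨f, rfl, rfl⟩ := exists_restrict_eq_and_restrict_compl_eq V x z
  exact ⟨f, rfl, isHarmonicOff_iff_submatrix_mulVec.mpr (by rw [hz, add_neg_cancel])⟩

theorem isUnit_complBlock_iff [Field R] {Q : Matrix m m R} {V : Finset m} :
    IsUnit (complBlock Q V) ↔
      ∀ f : m → R, V.restrict f = 0 → IsHarmonicOff Q V f → f = 0 := by
  rw [← mulVec_injective_iff_isUnit, ← coe_mulVecLin, injective_iff_map_eq_zero]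
  simp only [mulVecLin_apply]
  constructor
  · intro hinj f hfV hf
    rw [isHarmonicOff_iff_submatrix_mulVec, hfV, mulVec_zero, zero_add] at hf
    have hfVc : Vᶜ.restrict f = 0 := hinj _ hf
    funext i
    by_cases hi : i ∈ V
    · exact congrFun hfV ⟨i, hi⟩
    · exact congrFun hfVc ⟨i, Finset.mem_compl.mpr hi⟩
  · intro hzero z hz
    obtain ⟨f, hfV, rfl⟩ := exists_restrict_eq_and_restrict_compl_eq V 0 z
    have hf : IsHarmonicOff Q V f := by
      rw [isHarmonicOff_iff_submatrix_mulVec, hfV, mulVec_zero, hz, zero_add]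
    rw [hzero f hfV hf]
    rfl

end HarmonicOff

section SchurComplement

variable {m : Type*} [Fintype m] [DecidableEq m] {Q : Matrix m m ℝ} {V W : Finset m}

theorem schurKeep_mulVec_restrict (hQV : IsUnit (complBlock Q V)) {f : m → ℝ}
    (hf : IsHarmonicOff Q V f) : schurKeep Q V *ᵥ V.restrict f = V.restrict (Q *ᵥ f) := by
  have hVc := eq_neg_of_add_eq_zero_left (isHarmonicOff_iff_submatrix_mulVec.mp hf)
  rw [schurKeep, sub_mulVec, ← mulVec_mulVec, ← mulVec_mulVec, hVc, mulVec_neg, mulVec_neg,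
    mulVec_mulVec _ _⁻¹, nonsing_inv_mul _ ((isUnit_iff_isUnit_det _).mp hQV), one_mulVec,
    sub_neg_eq_add, submatrix_mulVec_restrict_add_compl]
  rfl

theorem schurKeep_apply_eq_mulVec (hQV : IsUnit (complBlock Q V)) {f : m → ℝ} {j : ↥V}
    (hfV : V.restrict f = Pi.single j 1) (hf : IsHarmonicOff Q V f) (i : ↥V) :
    schurKeep Q V i j = (Q *ᵥ f) i := by
  have h := congrFun (schurKeep_mulVec_restrict hQV hf) i
  rwa [hfV, mulVec_single_one] at h

theorem isHarmonicOff_schurKeep_restrict_iff (hQV : IsUnit (complBlock Q V)) {f : m → ℝ}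
    (hfV : IsHarmonicOff Q V f) :
    IsHarmonicOff (schurKeep Q V) (W.subtype (· ∈ V)) (V.restrict f) ↔ IsHarmonicOff Q W f := by
  rw [IsHarmonicOff, schurKeep_mulVec_restrict hQV hfV]
  constructor
  · intro hf i hiW
    by_cases hiV : i ∈ V
    · exact hf ⟨i, hiV⟩ fun hi => hiW (Finset.mem_subtype.mp hi)
    · exact hfV i hiV
  · exact fun hf i hi => hf i fun hiW => hi (Finset.mem_subtype.mpr hiW)

theorem isUnit_complBlock_schurKeep (hQV : IsUnit (complBlock Q V))
    (hQW : IsUnit (complBlock Q W)) (hWV : W ⊆ V) :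
    IsUnit (complBlock (schurKeep Q V) (W.subtype (· ∈ V))) := by
  rw [isUnit_complBlock_iff]
  intro x hxW hx
  obtain ⟨f, rfl, hfV⟩ := exists_restrict_eq_isHarmonicOff hQV x
  have hfW : W.restrict f = 0 := by
    funext i
    exact congrFun hxW ⟨⟨i, hWV i.2⟩, Finset.mem_subtype.mpr i.2⟩
  have hf : f = 0 := isUnit_complBlock_iff.mp hQW f hfW
    ((isHarmonicOff_schurKeep_restrict_iff hQV hfV).mp hx)
  rw [hf]
  rfl

theorem stmt_13_general (hQV : IsUnit (complBlock Q V)) (hQW : IsUnit (complBlock Q W))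
    (hWV : W ⊆ V) (i j : m) (hi : i ∈ W) (hj : j ∈ W) :
    schurKeep Q W ⟨i, hi⟩ ⟨j, hj⟩ =
      schurKeep (schurKeep Q V) (W.subtype (· ∈ V))
        ⟨⟨i, hWV hi⟩, Finset.mem_subtype.mpr hi⟩
        ⟨⟨j, hWV hj⟩, Finset.mem_subtype.mpr hj⟩ := by
  obtain ⟨f, hfW, hf⟩ := exists_restrict_eq_isHarmonicOff hQW (Pi.single ⟨j, hj⟩ 1)
  have hfV : IsHarmonicOff Q V f := hf.mono hWV
  have hfS : IsHarmonicOff (schurKeep Q V) (W.subtype (· ∈ V)) (V.restrict f) :=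
    (isHarmonicOff_schurKeep_restrict_iff hQV hfV).mpr hf
  have hfVW : (W.subtype (· ∈ V)).restrict (V.restrict f) =
      Pi.single ⟨⟨j, hWV hj⟩, Finset.mem_subtype.mpr hj⟩ 1 := by
    funext k
    have hk := congrFun hfW ⟨k, Finset.mem_subtype.mp k.2⟩
    simpa only [Finset.restrict, Pi.single_apply, Subtype.ext_iff] using hk
  rw [schurKeep_apply_eq_mulVec hQW hfW hf,
    schurKeep_apply_eq_mulVec (isUnit_complBlock_schurKeep hQV hQW hWV) hfVW hfS,
    schurKeep_mulVec_restrict hQV hfV]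
  rfl

end SchurComplement

section Laplacian

variable {m : Type*} [Fintype m]

theorem sum_mul_sub_sq_eq_neg_two_mul_dotProduct_mulVec {R : Type*} [CommRing R] {Q : Matrix m m R}
    (hsymm : Q.IsSymm) (hrow : Q *ᵥ (fun _ => 1) = 0) (f : m → R) :
    ∑ i, ∑ j, Q i j * (f i - f j) ^ 2 = -2 * (f ⬝ᵥ Q *ᵥ f) := by
  have hrow_sum (i : m) : ∑ j, Q i j = 0 := by
    simpa only [mulVec, dotProduct, mul_one, Pi.zero_apply] using congrFun hrow i
  have hcol_sum (j : m) : ∑ i, Q i j = 0 := by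
    simpa only [hsymm.apply] using hrow_sum j
  have hleft : ∑ i, ∑ j, Q i j * f i ^ 2 = 0 := by
    simp only [← Finset.sum_mul, hrow_sum, zero_mul, Finset.sum_const_zero]
  have hright : ∑ i, ∑ j, Q i j * f j ^ 2 = 0 := by
    rw [Finset.sum_comm]
    simp only [← Finset.sum_mul, hcol_sum, zero_mul, Finset.sum_const_zero]
  calc ∑ i, ∑ j, Q i j * (f i - f j) ^ 2
      = ∑ i, ∑ j, (Q i j * f i ^ 2 + Q i j * f j ^ 2 + -2 * (f i * (Q i j * f j))) :=
        Finset.sum_congr rfl fun i _ => Finset.sum_congr rfl fun j _ => by ring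
    _ = -2 * (f ⬝ᵥ Q *ᵥ f) := by
        simp only [Finset.sum_add_distrib, hleft, hright, zero_add, dotProduct, mulVec,
          Finset.mul_sum]

variable [DecidableEq m] {Q : Matrix m m ℝ}

theorem IsLaplacian.eq_of_dotProduct_mulVec_eq_zero_s13 (hQ : IsLaplacian Q) {f : m → ℝ}
    (hf : f ⬝ᵥ Q *ᵥ f = 0) (i j : m) : f i = f j := by
  obtain ⟨hsymm, hoff, hrow, hirr⟩ := hQ
  have hnonpos (k l : m) : Q k l * (f k - f l) ^ 2 ≤ 0 := by
    rcases eq_or_ne k l with rfl | hkl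
    · simp
    · exact mul_nonpos_of_nonpos_of_nonneg (hoff k l hkl) (sq_nonneg _)
  have henergy : ∑ p : m × m, Q p.1 p.2 * (f p.1 - f p.2) ^ 2 = 0 := by
    rw [Fintype.sum_prod_type,
      sum_mul_sub_sq_eq_neg_two_mul_dotProduct_mulVec hsymm hrow, hf, mul_zero]
  have hedge (k l : m) (hkl : Q k l ≠ 0) : f k = f l := by
    have hterm := (Finset.sum_eq_zero_iff_of_nonpos fun p _ => hnonpos p.1 p.2).mp henergy
      (k, l) (Finset.mem_univ _)
    exact sub_eq_zero.mp (pow_eq_zero_iff two_ne_zero |>.mp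
      ((mul_eq_zero.mp hterm).resolve_left hkl))
  by_contra hij
  obtain ⟨k, hk, l, hl, hkl⟩ := hirr {k | f k = f j} ⟨j, by simp⟩
    fun huniv => hij (by simpa using huniv.ge (Finset.mem_univ i))
  simp only [Finset.mem_filter_univ] at hk hl
  exact hl ((hedge k l hkl).symm.trans hk)

theorem IsLaplacian.isUnit_complBlock (hQ : IsLaplacian Q) {V : Finset m} (hV : V.Nonempty) :
    IsUnit (complBlock Q V) := by
  rw [isUnit_complBlock_iff]
  intro f hfV hf
  have hvanish (i : m) (hi : i ∈ V) : f i = 0 := congrFun hfV ⟨i, hi⟩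
  have henergy : f ⬝ᵥ Q *ᵥ f = 0 := by
    refine Finset.sum_eq_zero fun i _ => ?_
    by_cases hi : i ∈ V
    · rw [hvanish i hi, zero_mul]
    · rw [hf i hi, mul_zero]
  obtain ⟨v, hv⟩ := hV
  funext i
  exact (hQ.eq_of_dotProduct_mulVec_eq_zero_s13 henergy i v).trans (hvanish v hv)

end Laplacian

/-- The quotient (composition) property of the Schur complement:
`Q/(N∖W) = [Q/(N∖V)]/(V∖W)` for `W ⊆ V ⊆ N`.  Here `schurKeep Q W = Q/(N∖W)`,
`schurKeep Q V = Q/(N∖V)`, and taking the Schur complement of the latter that keeps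
the indices of `W` (viewed inside `V`) is `[Q/(N∖V)]/(V∖W)`. -/
theorem stmt_13 {n : ℕ} (hn : 2 ≤ n) (Q : Matrix (Fin n) (Fin n) ℝ)
    (hQ : IsLaplacian Q)
    (W V : Finset (Fin n)) (hW : W.Nonempty) (hWV : W ⊆ V) (hV : V ≠ Finset.univ) :
    ∀ (i j : Fin n) (hi : i ∈ W) (hj : j ∈ W),
      schurKeep Q W ⟨i, hi⟩ ⟨j, hj⟩ =
        schurKeep (schurKeep Q V) (W.subtype (· ∈ V))
          ⟨⟨i, hWV hi⟩, Finset.mem_subtype.mpr hi⟩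
          ⟨⟨j, hWV hj⟩, Finset.mem_subtype.mpr hj⟩ :=
  stmt_13_general (hQ.isUnit_complBlock (hW.mono hWV)) (hQ.isUnit_complBlock hW) hWV
end

section
/- Let n ≥ 2, let Q be an n×n Laplacian matrix with Moore–Penrose pseudoinverse Q†, and let i, j, k be three pairwise distinct indices. Then (e_i − e_j)ᵀ·Q†·(e_k − e_j) ≥ 0; geometrically, every angle of every triangular face of the simplex associated to Q is non-obtuse. -/
open Matrix

/-!
For `x = Q† (e_k - e_j)` the quantity to bound is `x i - x j`. The range of `Q` is the hyperplane
of zero-sum vectors: it lies in this hyperplane, and the kernel of `Q` is the line of constants.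
Since `Q Q†` fixes this range, `Q x = e_k - e_j`. This is nonnegative away from `j`, so by the
minimum principle `x` attains its minimum at `j`.
-/

section GeneralizedInverse

variable {R m n : Type*} [NonUnitalSemiring R] [Fintype m] [Fintype n]

theorem mulVec_mulVec_of_mem_range {A : Matrix m n R} {B : Matrix n m R}
    (hAB : A * B * A = A) {b : m → R} (hb : b ∈ Set.range A.mulVec) : A *ᵥ (B *ᵥ b) = b := by
  obtain ⟨x, rfl⟩ := hb
  rw [mulVec_mulVec, mulVec_mulVec, hAB]

end GeneralizedInverse

/-- The Laplacian of a strongly connected directed graph with positive arc weights, the arc from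
`i` to `j` having weight `-Q i j`. Strong connectivity is encoded by asking that an arc leaves every
nonempty proper set of vertices. -/
structure IsDigraphLaplacian {R m : Type*} [Ring R] [PartialOrder R] [Fintype m]
    (Q : Matrix m m R) : Prop where
  apply_nonpos : ∀ i j, i ≠ j → Q i j ≤ 0
  mulVec_one : Q *ᵥ 1 = 0
  exists_apply_ne_zero : ∀ V : Finset m, V.Nonempty → V ≠ Finset.univ →
    ∃ i ∈ V, ∃ j ∉ V, Q i j ≠ 0

namespace IsDigraphLaplacian

variable {m : Type*} [Fintype m]

section OrderedRing

variable {R : Type*} [Ring R]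

theorem mulVec_apply_eq_sum_mul_sub [PartialOrder R] {Q : Matrix m m R}
    (hQ : IsDigraphLaplacian Q) (x : m → R) (c : R) (a : m) :
    (Q *ᵥ x) a = ∑ b, Q a b * (x b - c) := by
  have hrow : ∑ b, Q a b = 0 := by
    simpa [mulVec, dotProduct] using congrFun hQ.mulVec_one a
  simp only [mul_sub, Finset.sum_sub_distrib, ← Finset.sum_mul, hrow, zero_mul, sub_zero]
  rfl

variable [LinearOrder R] [IsStrictOrderedRing R] {Q : Matrix m m R}

theorem mulVec_apply_neg_of_forall_le (hQ : IsDigraphLaplacian Q) {x : m → R} {a b : m}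
    (hmin : ∀ c, x a ≤ x c) (hab : x a < x b) (hQab : Q a b ≠ 0) : (Q *ᵥ x) a < 0 := by
  rw [hQ.mulVec_apply_eq_sum_mul_sub x (x a) a]
  refine Finset.sum_neg' (fun c _ ↦ ?_) ⟨b, Finset.mem_univ b, ?_⟩
  · rcases eq_or_ne a c with rfl | hac
    · simp
    · exact mul_nonpos_of_nonpos_of_nonneg (hQ.apply_nonpos a c hac) (sub_nonneg.2 (hmin c))
  · have hne : a ≠ b := by rintro rfl; exact hab.false
    exact mul_neg_of_neg_of_pos ((hQ.apply_nonpos a b hne).lt_of_ne hQab) (sub_pos.2 hab)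

theorem apply_le_of_forall_mulVec_nonneg (hQ : IsDigraphLaplacian Q) {x : m → R} {j : m}
    (hx : ∀ a, a ≠ j → 0 ≤ (Q *ᵥ x) a) (i : m) : x j ≤ x i := by
  classical
  have : Nonempty m := ⟨j⟩
  obtain ⟨p, hp⟩ := Finite.exists_min x
  suffices hjp : x j = x p from hjp ▸ hp i
  by_contra hjp
  -- An arc leaves the set of minimizers of `x`; its source violates `hx`.
  obtain ⟨a, ha, b, hb, hab⟩ := hQ.exists_apply_ne_zero {a | x a = x p} ⟨p, by simp⟩
    (fun huniv ↦ hjp (by simpa using huniv.ge (Finset.mem_univ j)))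
  simp only [Finset.mem_filter, Finset.mem_univ, true_and] at ha hb
  have haj : a ≠ j := by rintro rfl; exact hjp ha
  have hneg : (Q *ᵥ x) a < 0 :=
    hQ.mulVec_apply_neg_of_forall_le (ha ▸ hp) (ha ▸ (hp b).lt_of_ne' hb) hab
  exact (hx a haj).not_gt hneg

theorem apply_eq_of_mulVec_eq_zero (hQ : IsDigraphLaplacian Q) {x : m → R} (hx : Q *ᵥ x = 0)
    (i j : m) : x i = x j :=
  le_antisymm (hQ.apply_le_of_forall_mulVec_nonneg (fun _ _ ↦ by simp [hx]) j)
    (hQ.apply_le_of_forall_mulVec_nonneg (fun _ _ ↦ by simp [hx]) i)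

end OrderedRing

section OrderedField

variable {K : Type*} [Field K] [LinearOrder K] [IsStrictOrderedRing K] {Q : Matrix m m K}

theorem ker_mulVecLin [Nonempty m] (hQ : IsDigraphLaplacian Q) :
    LinearMap.ker Q.mulVecLin = Submodule.span K {1} := by
  ext x
  rw [LinearMap.mem_ker, mulVecLin_apply, Submodule.mem_span_singleton]
  constructor
  · intro hx
    refine ⟨x (Classical.arbitrary m), funext fun i ↦ ?_⟩
    simpa using hQ.apply_eq_of_mulVec_eq_zero hx (Classical.arbitrary m) i
  · rintro ⟨c, rfl⟩
    rw [mulVec_smul, hQ.mulVec_one, smul_zero]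

theorem range_mulVecLin [Nonempty m] (hQ : IsDigraphLaplacian Q) (hcol : 1 ᵥ* Q = 0) :
    LinearMap.range Q.mulVecLin = LinearMap.ker (dotProductBilin K K (1 : m → K)) := by
  apply Submodule.eq_of_le_of_finrank_eq
  · rintro _ ⟨x, rfl⟩
    simp [dotProduct_mulVec, hcol]
  · have hrank := Q.mulVecLin.finrank_range_add_finrank_ker
    rw [hQ.ker_mulVecLin, finrank_span_singleton one_ne_zero] at hrank
    have hsum : dotProductBilin K K (1 : m → K) ≠ 0 := fun h ↦ by
      simpa using LinearMap.congr_fun h 1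
    have hhyp := Module.Dual.finrank_ker_add_one_of_ne_zero hsum
    exact Nat.add_right_cancel (hrank.trans hhyp.symm)

theorem mem_range_mulVec_iff [Nonempty m] (hQ : IsDigraphLaplacian Q) (hcol : 1 ᵥ* Q = 0)
    {b : m → K} : b ∈ Set.range Q.mulVec ↔ 1 ⬝ᵥ b = 0 :=
  SetLike.ext_iff.1 (hQ.range_mulVecLin hcol) b

end OrderedField

end IsDigraphLaplacian

namespace IsLaplacian

variable {m : Type*} [Fintype m] [DecidableEq m] {Q : Matrix m m ℝ}

theorem isDigraphLaplacian (hQ : IsLaplacian Q) : IsDigraphLaplacian Q :=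
  ⟨hQ.2.1, hQ.2.2.1, hQ.2.2.2⟩

theorem one_vecMul (hQ : IsLaplacian Q) : 1 ᵥ* Q = 0 := by
  rw [← mulVec_transpose, hQ.1.eq, hQ.isDigraphLaplacian.mulVec_one]

end IsLaplacian

theorem stmt_16_general {K m : Type*} [Field K] [LinearOrder K] [IsStrictOrderedRing K]
    [Fintype m] [DecidableEq m] {Q B : Matrix m m K} (hQ : IsDigraphLaplacian Q)
    (hcol : 1 ᵥ* Q = 0) (hB : Q * B * Q = Q) (i j k : m) :
    0 ≤ (Pi.single i (1 : K) - Pi.single j 1) ⬝ᵥ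
      (B *ᵥ (Pi.single k (1 : K) - Pi.single j 1)) := by
  have : Nonempty m := ⟨j⟩
  set b : m → K := Pi.single k 1 - Pi.single j 1 with hb
  have hsolve : Q *ᵥ (B *ᵥ b) = b :=
    mulVec_mulVec_of_mem_range hB ((hQ.mem_range_mulVec_iff hcol).2 (by simp [hb]))
  have hnonneg : ∀ a, a ≠ j → 0 ≤ (Q *ᵥ (B *ᵥ b)) a := fun a haj ↦ by
    have hk : 0 ≤ (Pi.single k 1 : m → K) := Pi.single_nonneg.2 zero_le_one
    rw [hsolve]
    simpa [hb, haj] using hk a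
  rw [sub_dotProduct, single_one_dotProduct, single_one_dotProduct, sub_nonneg]
  exact hQ.apply_le_of_forall_mulVec_nonneg hnonneg i

/-- Every angle of every triangular face of the simplex of a Laplacian is non-obtuse:
`(e_i − e_j)ᵀ·Q†·(e_k − e_j) ≥ 0` for pairwise distinct `i, j, k`. -/
theorem stmt_16 {n : ℕ} (hn : 2 ≤ n) (Q : Matrix (Fin n) (Fin n) ℝ)
    (hQ : IsLaplacian Q)
    (Qd : Matrix (Fin n) (Fin n) ℝ) (hQd : IsMoorePenrose Q Qd)
    (i j k : Fin n) (hij : i ≠ j) (hjk : j ≠ k) (hik : i ≠ k) :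
    0 ≤ (Pi.single i (1 : ℝ) - Pi.single j 1) ⬝ᵥ
      (Qd *ᵥ (Pi.single k (1 : ℝ) - Pi.single j 1)) :=
  stmt_16_general hQ.isDigraphLaplacian hQ.one_vecMul hQd.1 i j k
end

section
/- Let n ≥ 2 and let Q be an n×n Laplacian matrix, with effective resistances ω_ij = (e_i − e_j)ᵀ·Q†·(e_i − e_j). Then the map (i, j) ↦ √(ω_ij) is a metric on the index set, and it is a Euclidean metric: there exist affinely independent points s_1, …, s_n in ℝ^{n−1} with ‖s_i − s_j‖ = √(ω_ij) for all i, j. -/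
open Matrix

/-!
Positive semidefiniteness and irreducibility make the constants the whole kernel of a Laplacian `Q`,
so every vector with zero sum has the form `Q *ᵥ y`, and there
`(Q *ᵥ y) ⬝ᵥ Q† *ᵥ (Q *ᵥ y) = y ⬝ᵥ Q *ᵥ y`. Hence the quadratic form of `Q†` is positive definite on
the direction of the standard simplex. By Sylvester's law of inertia a positive definite form is a
Euclidean squared norm in suitable linear coordinates, and in these coordinates the standard
simplex has edge lengths `√ω i j`.
-/

section Simplex

open Module

theorem exists_linearEquiv_norm_sq_eq {V : Type*} [AddCommGroup V] [Module ℝ V]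
    [FiniteDimensional ℝ V] {q : QuadraticForm ℝ V} (hq : q.PosDef) {d : ℕ}
    (hd : finrank ℝ V = d) :
    ∃ L : V ≃ₗ[ℝ] EuclideanSpace ℝ (Fin d), ∀ v, ‖L v‖ ^ 2 = q v := by
  subst hd
  obtain ⟨ε, hε, ⟨e⟩⟩ := q.equivalent_one_zero_neg_one_weighted_sum_squared
  have hε_pos (i) : 0 < ε i := by
    have hsingle : e.symm (Pi.single i 1) ≠ 0 := by simp
    simpa [QuadraticMap.weightedSumSquares_apply, Pi.single_apply] using hq _ hsingle
  have hε_one (i) : ε i = 1 := by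
    have := hε_pos i
    rcases hε i with h | h | h <;> linarith
  have hq_sum (v) : q v = ∑ i, e v i ^ 2 := by
    rw [← e.map_app, QuadraticMap.weightedSumSquares_apply]
    simp only [hε_one, one_smul, sq]
  refine ⟨e.toLinearEquiv.trans (WithLp.linearEquiv 2 ℝ _).symm, fun v => ?_⟩
  simp [EuclideanSpace.norm_sq_eq, hq_sum]

theorem exists_affineIndependent_dist_eq_sqrt {ι V : Type*} [Fintype ι] [AddCommGroup V]
    [Module ℝ V] {d : ℕ} (hd : Fintype.card ι = d + 1) {p : ι → V} (hp : AffineIndependent ℝ p)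
    (q : QuadraticForm ℝ V) (hq : ∀ v ∈ vectorSpan ℝ (Set.range p), v ≠ 0 → 0 < q v) :
    ∃ s : ι → EuclideanSpace ℝ (Fin d),
      AffineIndependent ℝ s ∧ ∀ i j, dist (s i) (s j) = √(q (p i - p j)) := by
  have ⟨o⟩ : Nonempty ι := Fintype.card_pos_iff.mp (by omega)
  let W := vectorSpan ℝ (Set.range p)
  have hqW : (q.comp W.subtype).PosDef := fun w hw => hq w w.2 (by simpa using hw)
  obtain ⟨L, hL⟩ := exists_linearEquiv_norm_sq_eq hqW (hp.finrank_vectorSpan hd)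
  let t : ι → W := fun i => ⟨p i - p o, vsub_mem_vectorSpan ℝ ⟨i, rfl⟩ ⟨o, rfl⟩⟩
  have ht : AffineIndependent ℝ t := by
    refine .of_comp W.subtype.toAffineMap ?_
    convert hp.vadd (v := -p o) using 1
    ext i
    simp [t, sub_eq_neg_add]
  refine ⟨L ∘ t, ht.map' L.toLinearMap.toAffineMap L.injective, fun i j => ?_⟩
  have hL_sub := hL (t i - t j)
  have ht_sub : (t i - t j : W) = p i - p j := by simp [t]
  rw [map_sub, QuadraticMap.comp_apply, Submodule.subtype_apply, ht_sub] at hL_sub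
  rw [← hL_sub, Real.sqrt_sq (norm_nonneg _), dist_eq_norm, Function.comp_apply,
    Function.comp_apply]

theorem sum_eq_zero_of_mem_vectorSpan_range_single {R m : Type*} [Ring R] [Fintype m]
    [DecidableEq m] {w : m → R}
    (hw : w ∈ vectorSpan R (Set.range fun i => (Pi.single i 1 : m → R))) : ∑ i, w i = 0 := by
  induction hw using Submodule.span_induction with
  | mem v hv =>
    obtain ⟨_, ⟨i, rfl⟩, _, ⟨j, rfl⟩, rfl⟩ := hv
    simp
  | zero => simp
  | add v w _ _ hv hw => simp [Finset.sum_add_distrib, hv, hw]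
  | smul c v _ hv => simp [← Finset.mul_sum, hv]

end Simplex

section GeneralizedInverse

variable {m : Type*} [Fintype m]

theorem exists_mulVec_eq_of_forall_vecMul_eq_zero {K l : Type*} [Field K] [Fintype l]
    {A : Matrix l m K} {w : l → K} (hw : ∀ x, x ᵥ* A = 0 → x ⬝ᵥ w = 0) : ∃ y, A *ᵥ y = w := by
  classical
  change w ∈ LinearMap.range A.mulVecLin
  refine (Subspace.forall_mem_dualAnnihilator_apply_eq_zero_iff _ _).mp fun φ hφ => ?_
  obtain ⟨x, rfl⟩ := (dotProductEquiv K l).surjective φ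
  refine hw x (dotProduct_eq_zero _ fun y => ?_)
  rw [← dotProduct_mulVec]
  exact (Submodule.mem_dualAnnihilator _).mp hφ _ ⟨y, rfl⟩

theorem mulVec_dotProduct_mulVec_mulVec {R : Type*} [CommSemiring R] {Q G : Matrix m m R}
    (hQ : Q.IsSymm) (hG : Q * G * Q = Q) (y : m → R) :
    (Q *ᵥ y) ⬝ᵥ G *ᵥ (Q *ᵥ y) = y ⬝ᵥ Q *ᵥ y := by
  conv_lhs => enter [1]; rw [← hQ.eq, mulVec_transpose]
  rw [← dotProduct_mulVec, mulVec_mulVec, mulVec_mulVec, hG]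

theorem dotProduct_mulVec_pos_of_sum_eq_zero {Q G : Matrix m m ℝ} (hQ : Q.PosSemidef)
    (hker : ∀ x, Q *ᵥ x = 0 → ∀ i j, x i = x j) (hG : Q * G * Q = Q) {w : m → ℝ}
    (hw : ∑ i, w i = 0) (hw_ne : w ≠ 0) : 0 < w ⬝ᵥ G *ᵥ w := by
  have hQ_symm : Q.IsSymm := isHermitian_iff_isSymm.mp hQ.isHermitian
  obtain ⟨y, rfl⟩ : ∃ y, Q *ᵥ y = w := by
    refine exists_mulVec_eq_of_forall_vecMul_eq_zero fun x hx => ?_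
    rw [← mulVec_transpose, hQ_symm.eq] at hx
    obtain ⟨o, -⟩ := Function.ne_iff.mp hw_ne
    simp_rw [dotProduct, hker x hx _ o, ← Finset.mul_sum, hw, mul_zero]
  rw [mulVec_dotProduct_mulVec_mulVec hQ_symm hG]
  exact (hQ.dotProduct_mulVec_nonneg y).lt_of_ne' fun h =>
    hw_ne ((hQ.dotProduct_mulVec_zero_iff y).mp h)

end GeneralizedInverse

section Laplacian

variable {m : Type*} [Fintype m]

theorem two_mul_dotProduct_mulVec_self {R : Type*} [CommRing R] {Q : Matrix m m R}
    (hQ : Q.IsSymm) (hrow : Q *ᵥ (fun _ => 1) = 0) (x : m → R) :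
    2 * (x ⬝ᵥ Q *ᵥ x) = -∑ i, ∑ j, Q i j * (x i - x j) ^ 2 := by
  have hrow_sum (i) : ∑ j, Q i j = 0 := by
    simpa [mulVec, dotProduct] using congrFun hrow i
  have hleft : ∑ i, ∑ j, Q i j * x i ^ 2 = 0 := by
    simp_rw [← Finset.sum_mul, hrow_sum, zero_mul, Finset.sum_const_zero]
  have hright : ∑ i, ∑ j, Q i j * x j ^ 2 = 0 := by
    rw [Finset.sum_comm, ← hleft]
    simp_rw [hQ.apply]
  have hexpand : ∑ i, ∑ j, Q i j * (x i - x j) ^ 2 =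
      ∑ i, ∑ j, Q i j * x i ^ 2 + ∑ i, ∑ j, Q i j * x j ^ 2 - 2 * (x ⬝ᵥ Q *ᵥ x) := by
    simp only [dotProduct, mulVec, Finset.mul_sum, ← Finset.sum_add_distrib,
      ← Finset.sum_sub_distrib]
    exact Finset.sum_congr rfl fun i _ => Finset.sum_congr rfl fun j _ => by ring
  rw [hexpand, hleft, hright]
  ring

namespace IsLaplacian

variable [DecidableEq m] {Q : Matrix m m ℝ}

theorem mul_sub_sq_nonpos (hQ : IsLaplacian Q) (x : m → ℝ) (i j : m) :
    Q i j * (x i - x j) ^ 2 ≤ 0 := by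
  rcases eq_or_ne i j with rfl | hij
  · simp
  · exact mul_nonpos_of_nonpos_of_nonneg (hQ.2.1 i j hij) (sq_nonneg _)

theorem posSemidef (hQ : IsLaplacian Q) : Q.PosSemidef := by
  refine .of_dotProduct_mulVec_nonneg (isHermitian_iff_isSymm.mpr hQ.1) fun x => ?_
  have hform := two_mul_dotProduct_mulVec_self hQ.1 hQ.2.2.1 x
  have hnonpos : ∑ i, ∑ j, Q i j * (x i - x j) ^ 2 ≤ 0 :=
    Finset.sum_nonpos fun i _ => Finset.sum_nonpos fun j _ => hQ.mul_sub_sq_nonpos x i j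
  rw [star_trivial]
  linarith

theorem apply_eq_of_mulVec_eq_zero (hQ : IsLaplacian Q) {x : m → ℝ} (hx : Q *ᵥ x = 0)
    (i j : m) : x i = x j := by
  have hedge (a b) (hab : Q a b ≠ 0) : x a = x b := by
    have hsum : ∑ i, ∑ j, Q i j * (x i - x j) ^ 2 = 0 := by
      simpa [hx] using two_mul_dotProduct_mulVec_self hQ.1 hQ.2.2.1 x
    have hrow := (Finset.sum_eq_zero_iff_of_nonpos fun i _ =>
      Finset.sum_nonpos fun j _ => hQ.mul_sub_sq_nonpos x i j).mp hsum a (Finset.mem_univ a)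
    have hterm := (Finset.sum_eq_zero_iff_of_nonpos fun j _ =>
      hQ.mul_sub_sq_nonpos x a j).mp hrow b (Finset.mem_univ b)
    simpa [hab, sub_eq_zero] using hterm
  have hlevel : Finset.univ.filter (fun k => x k = x j) = Finset.univ := by
    by_contra hne
    obtain ⟨a, ha, b, hb, hab⟩ := hQ.2.2.2 _ ⟨j, by simp⟩ hne
    simp only [Finset.mem_filter_univ] at ha hb
    exact hb (hedge a b hab ▸ ha)
  exact Finset.filter_eq_self.mp hlevel i (Finset.mem_univ i)

end IsLaplacian

end Laplacian

theorem stmt_17_general {m : Type*} [Fintype m] [DecidableEq m] {d : ℕ}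
    (hd : Fintype.card m = d + 1) {Q G : Matrix m m ℝ} (hQ : Q.PosSemidef)
    (hker : ∀ x, Q *ᵥ x = 0 → ∀ i j, x i = x j) (hG : Q * G * Q = Q) {ω : m → m → ℝ}
    (hω : ∀ i j, ω i j = (Pi.single i (1 : ℝ) - Pi.single j 1) ⬝ᵥ
      (G *ᵥ (Pi.single i (1 : ℝ) - Pi.single j 1))) :
    (∀ i j, √(ω i j) = 0 ↔ i = j) ∧
    (∀ i j, √(ω i j) = √(ω j i)) ∧
    (∀ i j k, √(ω i k) ≤ √(ω i j) + √(ω j k)) ∧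
    ∃ s : m → EuclideanSpace ℝ (Fin d),
      AffineIndependent ℝ s ∧ ∀ i j, dist (s i) (s j) = √(ω i j) := by
  have hq_apply (v : m → ℝ) : G.toQuadraticForm' v = v ⬝ᵥ G *ᵥ v := toLinearMap₂'_apply' G v v
  obtain ⟨s, hs, hdist⟩ := exists_affineIndependent_dist_eq_sqrt hd
    (Pi.linearIndependent_single_one m ℝ).affineIndependent G.toQuadraticForm' fun w hw hw_ne =>
      hq_apply w ▸ dotProduct_mulVec_pos_of_sum_eq_zero hQ hker hG
        (sum_eq_zero_of_mem_vectorSpan_range_single hw) hw_ne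
  simp_rw [hq_apply, ← hω] at hdist
  simp_rw [← hdist]
  exact ⟨fun i j => dist_eq_zero.trans hs.injective.eq_iff, fun i j => dist_comm _ _,
    fun i j k => dist_triangle _ _ _, s, hs, fun _ _ => rfl⟩

/-- The square root of the effective resistance is a metric on the nodes, and it is a
Euclidean metric realized by the vertices of a simplex in `ℝ^{n−1}`. -/
theorem stmt_17 {n : ℕ} (hn : 2 ≤ n) (Q : Matrix (Fin n) (Fin n) ℝ)
    (hQ : IsLaplacian Q)
    (Qd : Matrix (Fin n) (Fin n) ℝ) (hQd : IsMoorePenrose Q Qd)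
    (ω : Fin n → Fin n → ℝ)
    (hω : ∀ i j, ω i j = (Pi.single i (1 : ℝ) - Pi.single j 1) ⬝ᵥ
      (Qd *ᵥ (Pi.single i (1 : ℝ) - Pi.single j 1))) :
    (∀ i j, Real.sqrt (ω i j) = 0 ↔ i = j) ∧
    (∀ i j, Real.sqrt (ω i j) = Real.sqrt (ω j i)) ∧
    (∀ i j k, Real.sqrt (ω i k) ≤ Real.sqrt (ω i j) + Real.sqrt (ω j k)) ∧
    ∃ s : Fin n → EuclideanSpace ℝ (Fin (n - 1)),
      AffineIndependent ℝ s ∧ ∀ i j, dist (s i) (s j) = Real.sqrt (ω i j) := by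
  exact stmt_17_general (by rw [Fintype.card_fin]; omega) hQ.posSemidef
    (fun _ => hQ.apply_eq_of_mulVec_eq_zero) hQd.1 hω
end

section
/- Let n ≥ 2 and let Q be an n×n Laplacian matrix, with effective resistances ω_ij = (e_i − e_j)ᵀ·Q†·(e_i − e_j). Then the effective resistance is a metric on the index set: ω_ij ≥ 0 with ω_ij = 0 if and only if i = j; ω_ij = ω_ji for all i, j; and ω_ij + ω_jk ≥ ω_ik for all i, j, k. -/
open Matrix

/-!
Let `G` satisfy `Q * G * Q = Q`, and let `φⁱʲ = G (eᵢ - eⱼ)` be the potential induced by a unit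
current from `i` to `j`. By symmetry of `Q`, the rows of `1 - Q * G` lie in the kernel of `Q`, which
consists of constant vectors; hence `Q φⁱʲ = eᵢ - eⱼ`. The maximum principle then places the maximum
of `φⁱʲ` at `i` and its minimum at `j`, so that `ωᵢⱼ` is the oscillation of `φⁱʲ`. Since
`φⁱᵏ = φⁱʲ + φʲᵏ`, the triangle inequality is the subadditivity of the oscillation.
-/

section ZeroRowSum

variable {ι R : Type*} [Fintype ι]

theorem mulVec_apply_eq_sum_mul_sub [NonAssocRing R] {A : Matrix ι ι R}
    (hA : A *ᵥ (fun _ => 1) = 0) (x : ι → R) (p : ι) :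
    (A *ᵥ x) p = ∑ k, A p k * (x k - x p) := by
  have row_sum : ∑ k, A p k = 0 := by simpa [mulVec, dotProduct] using congrFun hA p
  simp [mul_sub, Finset.sum_sub_distrib, ← Finset.sum_mul, row_sum, mulVec, dotProduct]

theorem eq_of_forall_le_of_mulVec_nonpos [Ring R] [LinearOrder R] [IsStrictOrderedRing R]
    {A : Matrix ι ι R} (hA : A *ᵥ (fun _ => 1) = 0) {x : ι → R} {p q : ι}
    (hoff : ∀ k, p ≠ k → A p k ≤ 0) (hmax : ∀ k, x k ≤ x p) (hp : (A *ᵥ x) p ≤ 0)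
    (hpq : A p q ≠ 0) : x q = x p := by
  have term_nonneg : ∀ k ∈ Finset.univ, 0 ≤ A p k * (x k - x p) := by
    intro k _
    obtain rfl | hk := eq_or_ne p k
    · simp
    · exact mul_nonneg_of_nonpos_of_nonpos (hoff k hk) (sub_nonpos.2 (hmax k))
  rw [mulVec_apply_eq_sum_mul_sub hA] at hp
  have sum_zero := le_antisymm hp (Finset.sum_nonneg term_nonneg)
  have term_zero := (Finset.sum_eq_zero_iff_of_nonneg term_nonneg).1 sum_zero q (Finset.mem_univ q)
  exact sub_eq_zero.1 ((mul_eq_zero.1 term_zero).resolve_left hpq)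

end ZeroRowSum

section Potential

variable {ι : Type*} [Fintype ι] [DecidableEq ι]

/-- The potential induced by a unit current entering at `i` and leaving at `j`, where `G` is a
generalized inverse of the Laplacian. -/
def unitPotential (G : Matrix ι ι ℝ) (i j : ι) : ι → ℝ :=
  G *ᵥ (Pi.single i 1 - Pi.single j 1)

/-- The effective resistance between `i` and `j`, where `G` is a generalized inverse of the
Laplacian; the paper takes the Moore–Penrose pseudoinverse. -/
def effectiveResistance (G : Matrix ι ι ℝ) (i j : ι) : ℝ :=
  (Pi.single i 1 - Pi.single j 1) ⬝ᵥ (G *ᵥ (Pi.single i 1 - Pi.single j 1))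

variable (G : Matrix ι ι ℝ) (i j k : ι)

theorem effectiveResistance_eq_unitPotential_sub :
    effectiveResistance G i j = unitPotential G i j i - unitPotential G i j j := by
  simp [effectiveResistance, unitPotential, sub_dotProduct]

theorem unitPotential_swap : unitPotential G j i = -unitPotential G i j := by
  rw [unitPotential, unitPotential, ← mulVec_neg, neg_sub]

theorem unitPotential_add : unitPotential G i j + unitPotential G j k = unitPotential G i k := by
  rw [unitPotential, unitPotential, unitPotential, ← mulVec_add, sub_add_sub_cancel]

theorem effectiveResistance_self : effectiveResistance G i i = 0 := by
  simp [effectiveResistance]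

theorem effectiveResistance_comm : effectiveResistance G i j = effectiveResistance G j i := by
  rw [effectiveResistance, effectiveResistance, ← neg_sub, mulVec_neg, neg_dotProduct_neg]

end Potential

namespace IsLaplacian

variable {ι : Type*} [Fintype ι] [DecidableEq ι] {Q G : Matrix ι ι ℝ}

theorem apply_le_of_forall_ne_mulVec_nonpos (hQ : IsLaplacian Q) {x : ι → ℝ} {a : ι}
    (hx : ∀ i, i ≠ a → (Q *ᵥ x) i ≤ 0) (i : ι) : x i ≤ x a := by
  obtain ⟨-, hoff, hone, hirr⟩ := hQ
  obtain ⟨m, -, hm⟩ := Finset.exists_max_image Finset.univ x ⟨a, Finset.mem_univ a⟩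
  by_contra! hlt
  have ham : x a < x m := hlt.trans_le (hm i (Finset.mem_univ i))
  -- An edge `pq` leaves the set where `x` is maximal; as `p ≠ a`, maximality spreads along it.
  obtain ⟨p, hp, q, hq, hpq⟩ := hirr {k | x k = x m} ⟨m, by simp⟩
    (fun huniv => ham.ne (by simpa using Finset.eq_univ_iff_forall.1 huniv a))
  rw [Finset.mem_filter_univ] at hp hq
  have hpa : p ≠ a := by
    rintro rfl
    exact ham.ne hp
  have hqp : x q = x p := eq_of_forall_le_of_mulVec_nonpos hone (hoff p)
    (fun k => hp ▸ hm k (Finset.mem_univ k)) (hx p hpa) hpq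
  exact hq (hqp.trans hp)

theorem apply_eq_apply_of_mulVec_eq_zero (hQ : IsLaplacian Q) {x : ι → ℝ} (hx : Q *ᵥ x = 0)
    (i j : ι) : x i = x j :=
  le_antisymm (hQ.apply_le_of_forall_ne_mulVec_nonpos (fun k _ => (congrFun hx k).le) i)
    (hQ.apply_le_of_forall_ne_mulVec_nonpos (fun k _ => (congrFun hx k).le) j)

theorem mulVec_mulVec_of_sum_eq_zero (hQ : IsLaplacian Q) (hG : Q * G * Q = Q) {v : ι → ℝ}
    (hv : ∑ i, v i = 0) : Q *ᵥ (G *ᵥ v) = v := by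
  have left_annihilates : (1 - Q * G) * Q = 0 := by rw [sub_mul, hG, one_mul, sub_self]
  have row_mem_ker (a : ι) : Q *ᵥ (1 - Q * G) a = 0 := by
    rw [← vecMul_transpose, hQ.1.eq]
    exact congrFun left_annihilates a
  have residual_zero : (1 - Q * G) *ᵥ v = 0 := by
    ext a
    have row_const (k : ι) : (1 - Q * G) a k = (1 - Q * G) a a :=
      hQ.apply_eq_apply_of_mulVec_eq_zero (row_mem_ker a) k a
    calc
      ((1 - Q * G) *ᵥ v) a = ∑ k, (1 - Q * G) a k * v k := rfl
      _ = (1 - Q * G) a a * ∑ k, v k := by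
        rw [Finset.mul_sum]
        exact Finset.sum_congr rfl fun k _ => by rw [row_const k]
      _ = 0 := by rw [hv, mul_zero]
  rwa [sub_mulVec, one_mulVec, sub_eq_zero, ← mulVec_mulVec, eq_comm] at residual_zero

theorem mulVec_unitPotential (hQ : IsLaplacian Q) (hG : Q * G * Q = Q) (i j : ι) :
    Q *ᵥ unitPotential G i j = Pi.single i 1 - Pi.single j 1 :=
  hQ.mulVec_mulVec_of_sum_eq_zero hG (by simp)

theorem unitPotential_apply_le_source (hQ : IsLaplacian Q) (hG : Q * G * Q = Q) (i j k : ι) :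
    unitPotential G i j k ≤ unitPotential G i j i := by
  refine hQ.apply_le_of_forall_ne_mulVec_nonpos (fun l hl => ?_) k
  have single_nonneg : 0 ≤ (Pi.single j 1 : ι → ℝ) := Pi.single_nonneg.2 zero_le_one
  simpa [hQ.mulVec_unitPotential hG, hl] using single_nonneg l

theorem unitPotential_apply_sink_le (hQ : IsLaplacian Q) (hG : Q * G * Q = Q) (i j k : ι) :
    unitPotential G i j j ≤ unitPotential G i j k := by
  simpa [unitPotential_swap G i j] using hQ.unitPotential_apply_le_source hG j i k

theorem unitPotential_apply_sub_le_effectiveResistance (hQ : IsLaplacian Q) (hG : Q * G * Q = Q)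
    (i j k l : ι) :
    unitPotential G i j k - unitPotential G i j l ≤ effectiveResistance G i j := by
  rw [effectiveResistance_eq_unitPotential_sub]
  exact sub_le_sub (hQ.unitPotential_apply_le_source hG i j k)
    (hQ.unitPotential_apply_sink_le hG i j l)

theorem effectiveResistance_nonneg (hQ : IsLaplacian Q) (hG : Q * G * Q = Q) (i j : ι) :
    0 ≤ effectiveResistance G i j := by
  simpa using hQ.unitPotential_apply_sub_le_effectiveResistance hG i j i i

theorem effectiveResistance_eq_zero_iff (hQ : IsLaplacian Q) (hG : Q * G * Q = Q) {i j : ι} :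
    effectiveResistance G i j = 0 ↔ i = j := by
  refine ⟨fun hzero => ?_, fun hij => hij ▸ effectiveResistance_self G i⟩
  have potential_const (k l : ι) : unitPotential G i j k - unitPotential G i j l ≤ 0 :=
    hzero ▸ hQ.unitPotential_apply_sub_le_effectiveResistance hG i j k l
  have current_at_source : 0 = (Pi.single i 1 - Pi.single j 1 : ι → ℝ) i := by
    rw [← hQ.mulVec_unitPotential hG, mulVec_apply_eq_sum_mul_sub hQ.2.2.1]
    refine (Finset.sum_eq_zero fun k _ => ?_).symm
    rw [(potential_const k i).antisymm (by linarith [potential_const i k]), mul_zero]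
  by_contra hij
  simp [hij] at current_at_source

theorem effectiveResistance_triangle (hQ : IsLaplacian Q) (hG : Q * G * Q = Q) (i j k : ι) :
    effectiveResistance G i k ≤ effectiveResistance G i j + effectiveResistance G j k :=
  calc
    effectiveResistance G i k = unitPotential G i k i - unitPotential G i k k :=
      effectiveResistance_eq_unitPotential_sub G i k
    _ = (unitPotential G i j i - unitPotential G i j k) +
        (unitPotential G j k i - unitPotential G j k k) := by
      rw [← unitPotential_add G i j k, Pi.add_apply, Pi.add_apply, add_sub_add_comm]
    _ ≤ effectiveResistance G i j + effectiveResistance G j k :=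
      add_le_add (hQ.unitPotential_apply_sub_le_effectiveResistance hG i j i k)
        (hQ.unitPotential_apply_sub_le_effectiveResistance hG j k i k)

end IsLaplacian

theorem stmt_18_general {ι : Type*} [Fintype ι] [DecidableEq ι] {Q G : Matrix ι ι ℝ}
    (hQ : IsLaplacian Q) (hG : Q * G * Q = Q) :
    (∀ i j, 0 ≤ effectiveResistance G i j) ∧
    (∀ i j, effectiveResistance G i j = 0 ↔ i = j) ∧
    (∀ i j, effectiveResistance G i j = effectiveResistance G j i) ∧
    (∀ i j k, effectiveResistance G i k ≤ effectiveResistance G i j + effectiveResistance G j k) :=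
  ⟨hQ.effectiveResistance_nonneg hG, fun _ _ => hQ.effectiveResistance_eq_zero_iff hG,
    effectiveResistance_comm G, hQ.effectiveResistance_triangle hG⟩

/-- The effective resistance is a metric on the index set. -/
theorem stmt_18 {n : ℕ} (hn : 2 ≤ n) (Q : Matrix (Fin n) (Fin n) ℝ)
    (hQ : IsLaplacian Q)
    (Qd : Matrix (Fin n) (Fin n) ℝ) (hQd : IsMoorePenrose Q Qd)
    (ω : Fin n → Fin n → ℝ)
    (hω : ∀ i j, ω i j = (Pi.single i (1 : ℝ) - Pi.single j 1) ⬝ᵥ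
      (Qd *ᵥ (Pi.single i (1 : ℝ) - Pi.single j 1))) :
    (∀ i j, 0 ≤ ω i j) ∧
    (∀ i j, ω i j = 0 ↔ i = j) ∧
    (∀ i j, ω i j = ω j i) ∧
    (∀ i j k, ω i k ≤ ω i j + ω j k) := by
  obtain rfl : ω = effectiveResistance Qd := funext₂ hω
  exact stmt_18_general hQ hQd.1
end
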